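/- arXiv:2602.14537 — 3 statements merged into one kernel-verified Lean document; each statement's English description precedes it below -/
import Mathlib

section
/- (Equivalence of Koopman linear embedding and the CAP structure with Koopman closure.) Consider a discrete-time controlled system x⁺ = f(x,u) with 𝒳 ⊆ ℝ^n open and convex, 𝒰 ⊆ ℝ^m open, and f : 𝒳 × 𝒰 → 𝒳 surjective. Then the following are equivalent: (1) there exist a lifting function Ψ : 𝒳 → ℝ^{n_z} and constant matrices A_K ∈ ℝ^{n_z×n_z}, B_K ∈ ℝ^{n_z×m}, C_K ∈ ℝ^{n×n_z} such that Ψ(f(x,u)) = A_K Ψ(x) + B_K u and x = C_K Ψ(x) for all x ∈ 𝒳, u ∈ 𝒰; (2) there exist an invertible matrix T ∈ ℝ^{n×n}, a partition n = n₁ + n₂, functions g, h and matrices C ∈ ℝ^{n₁×n₁}, D ∈ ℝ^{n₁×m} such that, writing col(x₁, x₂) := Tx with x₁ ∈ ℝ^{n₁}, x₂ ∈ ℝ^{n₂}, one has T f(x,u) = col( g(x₂) + Cx₁ + Du , h(x₂) ) for all x ∈ 𝒳, u ∈ 𝒰, AND there exist a lifting function Ψ̄ : proj_{x₂}(T𝒳)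 → ℝ^{n̄_z} and constant matrices Ā_K ∈ ℝ^{n̄_z×n̄_z}, C̄_K ∈ ℝ^{(n₂+n₁)×n̄_z} such that Ψ̄(h(x₂)) = Ā_K Ψ̄(x₂) and col(x₂, g(x₂)) = C̄_K Ψ̄(x₂) for all x₂ ∈ proj_{x₂}(T𝒳). -/
open Matrix

noncomputable section

/-!
Suppose `Ψ(f(x,u)) = A Ψ(x) + B u` and `C Ψ(x) = x`, and let `W` be the set of lifted vectors `w`
such that `Ψ(y + t C w) = Ψ(y) + t w` whenever both points lie in `𝒳`. As `𝒳` is open and convex,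
local affinity along a direction is global, so `W` is a subspace. As `f` is onto `𝒳`, perturbing the
input, respectively the state, of a transition ending at `y` shows that `W` contains the range of
`B` and is invariant under `A`. Moreover `C` is injective on `W`, because `C w = 0` gives
`Ψ(y) = Ψ(y) + w`. Taking `x₁` to be the coordinates along `C W` and `x₂` complementary ones, one
gets `Ψ(x) = φ(x₂) + M x₁`, where `M` parametrizes `W`; inserting this into the lifted dynamics
gives the CAP form, and `φ` itself is the closing lifting of the autonomous part. Conversely
`(x₁, Ψ̄(x₂))` lifts a system in CAP form.
-/

open Filter Topology

namespace Koopman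

section Algebra

variable {R E V Z E₁ E₂ : Type*} [Ring R] [AddCommGroup E] [Module R E] [AddCommGroup V]
  [Module R V] [AddCommGroup Z] [Module R Z] [AddCommGroup E₁] [Module R E₁] [AddCommGroup E₂]
  [Module R E₂]

/-- `Ψ` is a Koopman linear embedding of `x⁺ = f(x,u)` on `X × U`: it lifts the system to
`z⁺ = A z + B u`, and the state is read off the lift by `C`. -/
structure IsLinearEmbedding (f : E → V → E) (X : Set E) (U : Set V) (Ψ : E → Z)
    (A : Z →ₗ[R] Z) (B : V →ₗ[R] Z) (C : Z →ₗ[R] E) : Prop where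
  lift_step : ∀ x ∈ X, ∀ u ∈ U, Ψ (f x u) = A (Ψ x) + B u
  recover : ∀ x ∈ X, C (Ψ x) = x

/-- In the coordinates `(x₁, x₂) = e x`, the system `x⁺ = f(x,u)` has the CAP form
`x₁⁺ = g(x₂) + N x₁ + D u`, `x₂⁺ = h(x₂)` on `X × U`. -/
def IsCAPForm (f : E → V → E) (X : Set E) (U : Set V) (e : E ≃ₗ[R] E₁ × E₂) (g : E₂ → E₁)
    (h : E₂ → E₂) (N : E₁ →ₗ[R] E₁) (D : V →ₗ[R] E₁) : Prop :=
  ∀ x ∈ X, ∀ u ∈ U, e (f x u) = (g (e x).2 + N (e x).1 + D u, h (e x).2)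

/-- `φ` is a Koopman closure on `Y` of the autonomous part `h` of a CAP form with coupling term
`g`: it lifts `h` to `z⁺ = A z`, and both `y` and `g y` are read off the lift by `C`. -/
structure IsKoopmanClosure (Y : Set E₂) (g : E₂ → E₁) (h : E₂ → E₂) (φ : E₂ → Z)
    (A : Z →ₗ[R] Z) (C : Z →ₗ[R] E₂ × E₁) : Prop where
  lift_step : ∀ y ∈ Y, φ (h y) = A (φ y)
  recover : ∀ y ∈ Y, (y, g y) = C (φ y)

/-- A splitting `Ψ x = φ x₂ + M x₁` of a linear embedding, in coordinates `(x₁, x₂) = e x`, for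
which the range of `M` is mapped by `C` onto the `x₁`-directions, is invariant under `A` (which acts
on it as `N`), and contains the range of `B` (with coordinates `D`). -/
structure IsAdaptedSplitting (X : Set E) (Ψ : E → Z) (A : Z →ₗ[R] Z) (B : V →ₗ[R] Z)
    (C : Z →ₗ[R] E) (e : E ≃ₗ[R] E₁ × E₂) (M : E₁ →ₗ[R] Z) (N : E₁ →ₗ[R] E₁)
    (D : V →ₗ[R] E₁) (φ : E₂ → Z) : Prop where
  coord : ∀ a, e (C (M a)) = (a, 0)
  map : ∀ a, A (M a) = M (N a)
  input : ∀ u, B u = M (D u)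
  lift_eq : ∀ x ∈ X, Ψ x = φ (e x).2 + M (e x).1

variable {f : E → V → E} {X : Set E} {U : Set V} {Ψ : E → Z} {A : Z →ₗ[R] Z} {B : V →ₗ[R] Z}
  {C : Z →ₗ[R] E} {e : E ≃ₗ[R] E₁ × E₂}

theorem IsLinearEmbedding.lift_add (hΨ : IsLinearEmbedding f X U Ψ A B C) {y y' : E} (hy : y ∈ X)
    (hy' : y' ∈ X) {w : Z} (h : Ψ y' = Ψ y + w) : Ψ (y + C w) = Ψ y + w := by
  rw [← h, ← hΨ.recover y' hy', h, map_add, hΨ.recover y hy]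

theorem IsCAPForm.isLinearEmbedding {g : E₂ → E₁} {h : E₂ → E₂} {N : E₁ →ₗ[R] E₁}
    {D : V →ₗ[R] E₁} {φ : E₂ → Z} {A : Z →ₗ[R] Z} {C : Z →ₗ[R] E₂ × E₁}
    (hf : IsCAPForm f X U e g h N D)
    (hφ : IsKoopmanClosure ((fun x => (e x).2) '' X) g h φ A C) :
    IsLinearEmbedding f X U (fun x => ((e x).1, φ (e x).2))
      ((N.coprod (LinearMap.snd R E₂ E₁ ∘ₗ C)).prod (A ∘ₗ LinearMap.snd R E₁ Z))
      (D.prod 0)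
      (e.symm.toLinearMap ∘ₗ LinearMap.prodMap LinearMap.id (LinearMap.fst R E₂ E₁ ∘ₗ C)) where
  lift_step x hx u hu := by
    have hstep := hφ.lift_step _ (Set.mem_image_of_mem _ hx)
    have hg := congrArg Prod.snd (hφ.recover _ (Set.mem_image_of_mem _ hx))
    simp [hf x hx u hu, hstep, ← hg, add_comm]
  recover x hx := by
    have hx₂ := congrArg Prod.fst (hφ.recover _ (Set.mem_image_of_mem _ hx))
    simp [← hx₂]

section Splitting

variable {M : E₁ →ₗ[R] Z} {N : E₁ →ₗ[R] E₁} {D : V →ₗ[R] E₁} {φ : E₂ → Z}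

theorem IsAdaptedSplitting.lift_step (hs : IsAdaptedSplitting X Ψ A B C e M N D φ)
    (hΨ : IsLinearEmbedding f X U Ψ A B C) {x : E} (hx : x ∈ X) {u : V} (hu : u ∈ U) :
    Ψ (f x u) = A (φ (e x).2) + M (N (e x).1 + D u) := by
  rw [hΨ.lift_step x hx u hu, hs.lift_eq x hx, map_add, hs.map, hs.input, map_add, add_assoc]

theorem IsAdaptedSplitting.isCAPForm (hs : IsAdaptedSplitting X Ψ A B C e M N D φ)
    (hΨ : IsLinearEmbedding f X U Ψ A B C) (hf : ∀ x ∈ X, ∀ u ∈ U, f x u ∈ X) :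
    IsCAPForm f X U e (fun y => (e (C (A (φ y)))).1) (fun y => (e (C (A (φ y)))).2) N D := by
  intro x hx u hu
  calc e (f x u) = e (C (A (φ (e x).2) + M (N (e x).1 + D u))) := by
        rw [← hs.lift_step hΨ hx hu, hΨ.recover _ (hf x hx u hu)]
    _ = e (C (A (φ (e x).2))) + (N (e x).1 + D u, 0) := by rw [map_add, map_add, hs.coord]
    _ = _ := by ext <;> simp [add_assoc]

theorem IsAdaptedSplitting.isKoopmanClosure (hs : IsAdaptedSplitting X Ψ A B C e M N D φ)
    (hΨ : IsLinearEmbedding f X U Ψ A B C) (hf : ∀ x ∈ X, ∀ u ∈ U, f x u ∈ X)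
    (hU : U.Nonempty) :
    IsKoopmanClosure ((fun x => (e x).2) '' X)
      (fun y => (e (C (A (φ y)))).1) (fun y => (e (C (A (φ y)))).2) φ
      (A - M ∘ₗ LinearMap.fst R E₁ E₂ ∘ₗ e.toLinearMap ∘ₗ C ∘ₗ A)
      ((LinearMap.snd R E₁ E₂ ∘ₗ e.toLinearMap ∘ₗ C).prod
        (LinearMap.fst R E₁ E₂ ∘ₗ e.toLinearMap ∘ₗ C ∘ₗ A)) where
  lift_step := by
    rintro _ ⟨x, hx, rfl⟩
    obtain ⟨u, hu⟩ := hU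
    have hsplit := hs.lift_eq _ (hf x hx u hu)
    rw [hs.lift_step hΨ hx hu, hs.isCAPForm hΨ hf x hx u hu, add_assoc (e _).1,
      map_add M (e _).1, ← add_assoc] at hsplit
    exact eq_sub_of_add_eq (add_right_cancel hsplit).symm
  recover := by
    rintro _ ⟨x, hx, rfl⟩
    have hx₂ : e x = e (C (φ (e x).2)) + ((e x).1, 0) := by
      rw [← hs.coord, ← map_add, ← map_add, ← hs.lift_eq x hx, hΨ.recover x hx]
    ext
    · simpa using congrArg Prod.snd hx₂
    · rfl

end Splitting

end Algebra

section AffineAlong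

variable {E Z : Type*} [AddCommGroup E] [Module ℝ E] [AddCommGroup Z] [Module ℝ Z]

/-- `Ψ` is affine with slope `w` along every segment of `X` in direction `v`. -/
def IsAffineAlong (X : Set E) (Ψ : E → Z) (v : E) (w : Z) : Prop :=
  ∀ y ∈ X, ∀ t : ℝ, y + t • v ∈ X → Ψ (y + t • v) = Ψ y + t • w

variable {X : Set E} {Ψ : E → Z} {v v' : E} {w w' : Z}

theorem IsAffineAlong.lift_add (h : IsAffineAlong X Ψ v w) {y : E} (hy : y ∈ X)
    (hyv : y + v ∈ X) : Ψ (y + v) = Ψ y + w := by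
  simpa using h y hy 1 (by simpa using hyv)

theorem IsAffineAlong.smul (h : IsAffineAlong X Ψ v w) (c : ℝ) :
    IsAffineAlong X Ψ (c • v) (c • w) := by
  intro y hy t ht
  rw [smul_smul] at ht ⊢
  rw [smul_smul, h y hy _ ht]

theorem isAffineAlong_of_eventually (hX : Convex ℝ X)
    (h : ∀ y ∈ X, ∀ᶠ t in 𝓝 (0 : ℝ), Ψ (y + t • v) = Ψ y + t • w) : IsAffineAlong X Ψ v w := by
  intro y hy t ht
  have hline : Convex ℝ {s : ℝ | y + s • v ∈ X} :=
    (hX.translate_preimage_right y).linear_preimage (LinearMap.toSpanSingleton ℝ E v)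
  have hlocal (a : ℝ) (ha : y + a • v ∈ X) :
      ∀ᶠ b in 𝓝 a, Ψ (y + a • v) - a • w = Ψ (y + b • v) - b • w := by
    have hba : Tendsto (fun b => b - a) (𝓝 a) (𝓝 0) :=
      (continuous_sub_right a).tendsto' a 0 (sub_self a)
    filter_upwards [hba.eventually (h _ ha)] with b hb
    rw [add_assoc, ← add_smul, add_sub_cancel] at hb
    rw [hb, sub_smul]
    abel
  have hconst : Ψ (y + (0 : ℝ) • v) - (0 : ℝ) • w = Ψ (y + t • v) - t • w :=
    hline.isPreconnected.induction₂ (fun a b => Ψ (y + a • v) - a • w = Ψ (y + b • v) - b • w)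
      (fun a ha => nhdsWithin_le_nhds (hlocal a ha)) (fun _ _ _ _ _ _ => Eq.trans)
      (fun _ _ _ _ => Eq.symm) (by simpa using hy) ht
  rw [zero_smul, zero_smul, add_zero, sub_zero] at hconst
  rw [hconst, sub_add_cancel]

variable [TopologicalSpace E] [ContinuousAdd E] [ContinuousSMul ℝ E]

theorem eventually_add_smul_mem (hX : IsOpen X) {y : E} (hy : y ∈ X) (v : E) :
    ∀ᶠ t in 𝓝 (0 : ℝ), y + t • v ∈ X := by
  have hc : Continuous fun t : ℝ => y + t • v := by fun_prop
  exact hc.continuousAt.eventually_mem (hX.mem_nhds (by simpa using hy))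

theorem IsAffineAlong.add (hXo : IsOpen X) (hX : Convex ℝ X) (h : IsAffineAlong X Ψ v w)
    (h' : IsAffineAlong X Ψ v' w') : IsAffineAlong X Ψ (v + v') (w + w') := by
  refine isAffineAlong_of_eventually hX fun y hy => ?_
  filter_upwards [eventually_add_smul_mem hXo hy v, eventually_add_smul_mem hXo hy (v + v')]
    with t ht ht'
  rw [smul_add, ← add_assoc] at ht' ⊢
  rw [h' _ ht t ht', h y hy t ht, smul_add, add_assoc]

/-- The lifted vectors `w` such that `Ψ` is affine with slope `w` along the direction `C w`. -/
def affineDirections (hXo : IsOpen X) (hX : Convex ℝ X) (Ψ : E → Z) (C : Z →ₗ[ℝ] E) :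
    Submodule ℝ Z where
  carrier := {w | IsAffineAlong X Ψ (C w) w}
  zero_mem' := by simp [IsAffineAlong]
  smul_mem' c w hw := by simpa using IsAffineAlong.smul hw c
  add_mem' hw hw' := by simpa using IsAffineAlong.add hXo hX hw hw'

theorem injective_domRestrict_affineDirections (hXo : IsOpen X) (hX : Convex ℝ X)
    (hne : X.Nonempty) (C : Z →ₗ[ℝ] E) :
    Function.Injective (C.domRestrict (affineDirections hXo hX Ψ C)) := by
  refine (injective_iff_map_eq_zero _).2 fun ⟨w, hw⟩ hCw => Subtype.ext ?_
  obtain ⟨y, hy⟩ := hne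
  have hCw : C w = 0 := hCw
  have hshift : Ψ (y + C w) = Ψ y + w := hw.lift_add hy (by simpa [hCw] using hy)
  simpa [hCw] using hshift

end AffineAlong

section Embedding

variable {E V Z : Type*} [AddCommGroup E] [Module ℝ E] [AddCommGroup V] [Module ℝ V]
  [AddCommGroup Z] [Module ℝ Z] {f : E → V → E} {X : Set E} {U : Set V} {Ψ : E → Z}
  {A : Z →ₗ[ℝ] Z} {B : V →ₗ[ℝ] Z} {C : Z →ₗ[ℝ] E}

namespace IsLinearEmbedding

theorem isAffineAlong_input [TopologicalSpace V] [ContinuousAdd V] [ContinuousSMul ℝ V]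
    (hΨ : IsLinearEmbedding f X U Ψ A B C) (hX : Convex ℝ X) (hU : IsOpen U)
    (hf : ∀ x ∈ X, ∀ u ∈ U, f x u ∈ X) (hsurj : X ⊆ Set.image2 f X U) (v : V) :
    IsAffineAlong X Ψ (C (B v)) (B v) := by
  refine isAffineAlong_of_eventually hX fun y hy => ?_
  obtain ⟨x, hx, u, hu, rfl⟩ := hsurj hy
  filter_upwards [eventually_add_smul_mem hU hu v] with t ht
  have hlift : Ψ (f x (u + t • v)) = Ψ (f x u) + t • B v := by
    rw [hΨ.lift_step x hx _ ht, hΨ.lift_step x hx u hu, map_add, map_smul, add_assoc]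
  rw [← map_smul C]
  exact hΨ.lift_add hy (hf x hx _ ht) hlift

variable [TopologicalSpace E] [ContinuousAdd E] [ContinuousSMul ℝ E]

theorem isAffineAlong_map (hΨ : IsLinearEmbedding f X U Ψ A B C) (hXo : IsOpen X)
    (hX : Convex ℝ X) (hf : ∀ x ∈ X, ∀ u ∈ U, f x u ∈ X) (hsurj : X ⊆ Set.image2 f X U) {w : Z}
    (hw : IsAffineAlong X Ψ (C w) w) : IsAffineAlong X Ψ (C (A w)) (A w) := by
  refine isAffineAlong_of_eventually hX fun y hy => ?_
  obtain ⟨x, hx, u, hu, rfl⟩ := hsurj hy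
  filter_upwards [eventually_add_smul_mem hXo hx (C w)] with t ht
  have hlift : Ψ (f (x + t • C w) u) = Ψ (f x u) + t • A w := by
    rw [hΨ.lift_step _ ht u hu, hΨ.lift_step x hx u hu, hw x hx t ht, map_add, map_smul,
      add_right_comm]
  rw [← map_smul C]
  exact hΨ.lift_add hy (hf _ ht u hu) hlift

end IsLinearEmbedding

theorem exists_eq_add_of_isAffineAlong {E₁ E₂ : Type*} [AddCommGroup E₁] [Module ℝ E₁]
    [AddCommGroup E₂] [Module ℝ E₂] {e : E ≃ₗ[ℝ] E₁ × E₂} {M : E₁ →ₗ[ℝ] Z}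
    (haff : ∀ a, IsAffineAlong X Ψ (e.symm (a, 0)) (M a)) :
    ∃ φ : E₂ → Z, ∀ x ∈ X, Ψ x = φ (e x).2 + M (e x).1 := by
  have hfactor : (X.domRestrict fun x => Ψ x - M (e x).1).FactorsThrough
      (X.domRestrict fun x => (e x).2) := by
    rintro ⟨x, hx⟩ ⟨y, hy⟩ (hxy : (e x).2 = (e y).2)
    have hdiff : x = y + e.symm ((e x).1 - (e y).1, 0) := by
      apply e.injective
      ext <;> simp [hxy]
    have hshift : Ψ x = Ψ y + M ((e x).1 - (e y).1) := by
      conv_lhs => rw [hdiff]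
      exact (haff _).lift_add hy (hdiff ▸ hx)
    change Ψ x - M (e x).1 = Ψ y - M (e y).1
    rw [hshift, map_sub]
    abel
  refine ⟨Function.extend (X.domRestrict fun x => (e x).2)
    (X.domRestrict fun x => Ψ x - M (e x).1) 0, fun x hx => ?_⟩
  exact eq_add_of_sub_eq (hfactor.extend_apply 0 ⟨x, hx⟩).symm

theorem IsLinearEmbedding.exists_isAdaptedSplitting [TopologicalSpace E] [ContinuousAdd E]
    [ContinuousSMul ℝ E] [TopologicalSpace V] [ContinuousAdd V] [ContinuousSMul ℝ V]
    {E₁ E₂ : Type*} [AddCommGroup E₁] [Module ℝ E₁] [AddCommGroup E₂] [Module ℝ E₂]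
    (hΨ : IsLinearEmbedding f X U Ψ A B C) (hXo : IsOpen X) (hX : Convex ℝ X) (hU : IsOpen U)
    (hf : ∀ x ∈ X, ∀ u ∈ U, f x u ∈ X) (hsurj : X ⊆ Set.image2 f X U)
    (b : affineDirections hXo hX Ψ C ≃ₗ[ℝ] E₁) (e : E ≃ₗ[ℝ] E₁ × E₂)
    (he : ∀ w, e (C.domRestrict _ w) = (b w, 0)) :
    ∃ M N D φ, IsAdaptedSplitting X Ψ A B C e M N D φ := by
  let W := affineDirections hXo hX Ψ C
  let M : E₁ →ₗ[ℝ] Z := W.subtype ∘ₗ b.symm.toLinearMap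
  have hM (a : E₁) : M a ∈ W := (b.symm a).2
  have hMb (w : W) : M (b w) = w := by simp [M]
  have hCM (a : E₁) : e (C (M a)) = (a, 0) := by simpa [M] using he (b.symm a)
  have hAM (a : E₁) : (A ∘ₗ M) a ∈ W := hΨ.isAffineAlong_map hXo hX hf hsurj (hM a)
  have hB (v : V) : B v ∈ W := hΨ.isAffineAlong_input hX hU hf hsurj v
  obtain ⟨φ, hφ⟩ : ∃ φ : E₂ → Z, ∀ x ∈ X, Ψ x = φ (e x).2 + M (e x).1 :=
    exists_eq_add_of_isAffineAlong fun a => by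
      rw [← hCM, LinearEquiv.symm_apply_apply]
      exact hM a
  exact ⟨M, b.toLinearMap ∘ₗ (A ∘ₗ M).codRestrict W hAM, b.toLinearMap ∘ₗ B.codRestrict W hB, φ,
    hCM, fun a => (hMb ⟨_, hAM a⟩).symm, fun v => (hMb ⟨_, hB v⟩).symm, hφ⟩

end Embedding

section FiniteDimensional

theorem exists_linearEquiv_prod_of_injective {K W E : Type*} [DivisionRing K] [AddCommGroup W]
    [Module K W] [AddCommGroup E] [Module K E] [FiniteDimensional K E] {J : W →ₗ[K] E}
    (hJ : Function.Injective J) :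
    ∃ (k l : ℕ) (b : W ≃ₗ[K] (Fin k → K)) (e : E ≃ₗ[K] (Fin k → K) × (Fin l → K)),
      ∀ w, e (J w) = (b w, 0) := by
  have : FiniteDimensional K W := .of_injective J hJ
  obtain ⟨Q, hQ⟩ := (LinearMap.range J).exists_isCompl
  let b := (Module.finBasis K W).equivFun
  refine ⟨_, _, b, (Submodule.prodEquivOfIsCompl _ _ hQ).symm.trans
    (((LinearEquiv.ofInjective J hJ).symm.trans b).prodCongr (Module.finBasis K Q).equivFun),
    fun w => ?_⟩
  have hsplit : (Submodule.prodEquivOfIsCompl _ _ hQ).symm (J w) =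
      (LinearEquiv.ofInjective J hJ w, 0) :=
    Submodule.prodEquivOfIsCompl_symm_apply_left _ _ hQ (LinearEquiv.ofInjective J hJ w)
  simp [hsplit]

theorem IsLinearEmbedding.exists_isCAPForm {E V Z : Type*} [AddCommGroup E] [Module ℝ E]
    [TopologicalSpace E] [ContinuousAdd E] [ContinuousSMul ℝ E] [FiniteDimensional ℝ E]
    [AddCommGroup V] [Module ℝ V] [TopologicalSpace V] [ContinuousAdd V] [ContinuousSMul ℝ V]
    [AddCommGroup Z] [Module ℝ Z] {f : E → V → E} {X : Set E} {U : Set V} {Ψ : E → Z}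
    {A : Z →ₗ[ℝ] Z} {B : V →ₗ[ℝ] Z} {C : Z →ₗ[ℝ] E} (hΨ : IsLinearEmbedding f X U Ψ A B C)
    (hXo : IsOpen X) (hX : Convex ℝ X) (hU : IsOpen U) (hf : ∀ x ∈ X, ∀ u ∈ U, f x u ∈ X)
    (hsurj : X ⊆ Set.image2 f X U) :
    ∃ (k l : ℕ) (e : E ≃ₗ[ℝ] (Fin k → ℝ) × (Fin l → ℝ)) (g : (Fin l → ℝ) → Fin k → ℝ)
      (h : (Fin l → ℝ) → Fin l → ℝ) (N : (Fin k → ℝ) →ₗ[ℝ] (Fin k → ℝ)) (D : V →ₗ[ℝ] (Fin k → ℝ))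
      (φ : (Fin l → ℝ) → Z) (A' : Z →ₗ[ℝ] Z) (C' : Z →ₗ[ℝ] (Fin l → ℝ) × (Fin k → ℝ)),
      IsCAPForm f X U e g h N D ∧
        IsKoopmanClosure ((fun x => (e x).2) '' X) g h φ A' C' := by
  rcases X.eq_empty_or_nonempty with rfl | hne
  · exact ⟨_, 0, (Module.finBasis ℝ E).equivFun.trans LinearEquiv.prodUnique.symm, 0, 0, 0, 0, 0,
      0, 0, by simp [IsCAPForm], by simp, by simp⟩
  obtain ⟨k, l, b, e, he⟩ := exists_linearEquiv_prod_of_injective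
    (injective_domRestrict_affineDirections (Ψ := Ψ) hXo hX hne C)
  obtain ⟨M, N, D, φ, hs⟩ := hΨ.exists_isAdaptedSplitting hXo hX hU hf hsurj b e he
  have hUne : U.Nonempty := (Set.image2_nonempty_iff.1 (hne.mono hsurj)).2
  exact ⟨k, l, e, _, _, N, D, φ, _, _, hs.isCAPForm hΨ hf, hs.isKoopmanClosure hΨ hf hUne⟩

theorem IsLinearEmbedding.exists_matrix {K n m Z : Type*} [Field K] [Fintype m] [AddCommGroup Z]
    [Module K Z] [FiniteDimensional K Z]
    {f : (n → K) → (m → K) → n → K} {X : Set (n → K)} {U : Set (m → K)} {Ψ : (n → K) → Z}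
    {A : Z →ₗ[K] Z} {B : (m → K) →ₗ[K] Z} {C : Z →ₗ[K] (n → K)}
    (hΨ : IsLinearEmbedding f X U Ψ A B C) :
    ∃ (nz : ℕ) (Ψ' : (n → K) → Fin nz → K) (A' : Matrix (Fin nz) (Fin nz) K)
      (B' : Matrix (Fin nz) m K) (C' : Matrix n (Fin nz) K),
      (∀ x ∈ X, ∀ u ∈ U, Ψ' (f x u) = A' *ᵥ Ψ' x + B' *ᵥ u) ∧ ∀ x ∈ X, x = C' *ᵥ Ψ' x := by
  classical
  let κ := (Module.finBasis K Z).equivFun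
  refine ⟨_, κ ∘ Ψ, (κ.toLinearMap ∘ₗ A ∘ₗ κ.symm.toLinearMap).toMatrix',
    (κ.toLinearMap ∘ₗ B).toMatrix', (C ∘ₗ κ.symm.toLinearMap).toMatrix',
    fun x hx u hu => ?_, fun x hx => ?_⟩
  · simp [LinearMap.toMatrix'_mulVec, hΨ.lift_step x hx u hu]
  · simp [LinearMap.toMatrix'_mulVec, hΨ.recover x hx]

end FiniteDimensional

end Koopman

/-- **Equivalence of Koopman linear embedding and the CAP structure with Koopman closure.**
For a system `x⁺ = f(x,u)` with `𝒳 ⊆ ℝ^n` open and convex, `𝒰` open and `f : 𝒳 × 𝒰 → 𝒳`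
surjective, the following are equivalent:
(1) there exist a lifting `Ψ : 𝒳 → ℝ^{n_z}` and matrices `A_K, B_K, C_K` with
    `Ψ(f(x,u)) = A_K Ψ(x) + B_K u` and `x = C_K Ψ(x)` on `𝒳 × 𝒰`;
(2) up to an invertible change of coordinates `T` the system has the CAP form
    `x₁⁺ = g(x₂) + Cx₁ + Du`, `x₂⁺ = h(x₂)`, and there exist a lifting `Ψ̄` on
    `proj_{x₂}(T𝒳)` and matrices `Ā_K, C̄_K` with `Ψ̄(h(x₂)) = Ā_K Ψ̄(x₂)` and
    `col(x₂, g(x₂)) = C̄_K Ψ̄(x₂)`. -/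
theorem koopman_linear_embedding_iff_CAP_with_koopman_closure
    {n m : ℕ} (f : (Fin n → ℝ) → (Fin m → ℝ) → (Fin n → ℝ))
    (X : Set (Fin n → ℝ)) (U : Set (Fin m → ℝ))
    (hXopen : IsOpen X) (hXconv : Convex ℝ X) (hUopen : IsOpen U)
    (hf : ∀ x ∈ X, ∀ u ∈ U, f x u ∈ X)
    (hsurj : ∀ y ∈ X, ∃ x ∈ X, ∃ u ∈ U, f x u = y) :
    (∃ (nz : ℕ) (Ψ : (Fin n → ℝ) → Fin nz → ℝ)
       (AK : Matrix (Fin nz) (Fin nz) ℝ) (BK : Matrix (Fin nz) (Fin m) ℝ)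
       (CK : Matrix (Fin n) (Fin nz) ℝ),
       (∀ x ∈ X, ∀ u ∈ U, Ψ (f x u) = AK.mulVec (Ψ x) + BK.mulVec u) ∧
       (∀ x ∈ X, x = CK.mulVec (Ψ x)))
    ↔
    (∃ (n₁ n₂ : ℕ) (T : Matrix (Fin n₁ ⊕ Fin n₂) (Fin n) ℝ)
       (S : Matrix (Fin n) (Fin n₁ ⊕ Fin n₂) ℝ),
       T * S = 1 ∧ S * T = 1 ∧
       ∃ (g : (Fin n₂ → ℝ) → Fin n₁ → ℝ) (h : (Fin n₂ → ℝ) → Fin n₂ → ℝ)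
         (Cm : Matrix (Fin n₁) (Fin n₁) ℝ) (D : Matrix (Fin n₁) (Fin m) ℝ),
         (∀ x ∈ X, ∀ u ∈ U,
           T.mulVec (f x u) =
             Sum.elim
               (g (fun i => T.mulVec x (Sum.inr i)) +
                 Cm.mulVec (fun i => T.mulVec x (Sum.inl i)) + D.mulVec u)
               (h (fun i => T.mulVec x (Sum.inr i)))) ∧
         ∃ (nzb : ℕ) (Ψb : (Fin n₂ → ℝ) → Fin nzb → ℝ)
           (Ab : Matrix (Fin nzb) (Fin nzb) ℝ)
           (Cb : Matrix (Fin n₂ ⊕ Fin n₁) (Fin nzb) ℝ),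
           ∀ x ∈ X,
             Ψb (h (fun i => T.mulVec x (Sum.inr i))) =
               Ab.mulVec (Ψb (fun i => T.mulVec x (Sum.inr i))) ∧
             Sum.elim (fun i => T.mulVec x (Sum.inr i))
                 (g (fun i => T.mulVec x (Sum.inr i)))
               = Cb.mulVec (Ψb (fun i => T.mulVec x (Sum.inr i)))) := by
  let toSum (k l : ℕ) := (LinearEquiv.sumArrowLequivProdArrow (Fin k) (Fin l) ℝ ℝ).symm
  constructor
  · rintro ⟨nz, Ψ, AK, BK, CK, hstep, hrec⟩
    have hΨ : Koopman.IsLinearEmbedding f X U Ψ AK.mulVecLin BK.mulVecLin CK.mulVecLin :=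
      ⟨hstep, fun x hx => (hrec x hx).symm⟩
    obtain ⟨k, l, e, g, h, N, D, φ, A', C', hcap, hφ⟩ :=
      hΨ.exists_isCAPForm hXopen hXconv hUopen hf hsurj
    let e' := e.trans (toSum k l)
    refine ⟨k, l, e'.toLinearMap.toMatrix', e'.symm.toLinearMap.toMatrix',
      by simp [← LinearMap.toMatrix'_comp], by simp [← LinearMap.toMatrix'_comp], g, h,
      N.toMatrix', D.toMatrix', ?_, nz, φ, A'.toMatrix',
      ((toSum l k).toLinearMap ∘ₗ C').toMatrix', ?_⟩ <;> simp only [LinearMap.toMatrix'_mulVec]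
    · exact fun x hx u hu => congrArg (toSum k l) (hcap x hx u hu)
    · exact fun x hx => ⟨hφ.lift_step _ ⟨x, hx, rfl⟩,
        congrArg (toSum l k) (hφ.recover _ ⟨x, hx, rfl⟩)⟩
  · rintro ⟨n₁, n₂, T, S, hTS, hST, g, h, Cm, D, hdyn, nzb, Ψb, Ab, Cb, hΨb⟩
    let e := (Matrix.toLin'OfInv hST hTS).trans (toSum n₁ n₂).symm
    have hcap : Koopman.IsCAPForm f X U e g h Cm.mulVecLin D.mulVecLin :=
      fun x hx u hu => congrArg (toSum n₁ n₂).symm (hdyn x hx u hu)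
    have hφ : Koopman.IsKoopmanClosure ((fun x => (e x).2) '' X) g h Ψb Ab.mulVecLin
        ((toSum n₂ n₁).symm.toLinearMap ∘ₗ Cb.mulVecLin) :=
      ⟨Set.forall_mem_image.2 fun x hx => (hΨb x hx).1,
        Set.forall_mem_image.2 fun x hx => congrArg (toSum n₂ n₁).symm (hΨb x hx).2⟩
    exact (hcap.isLinearEmbedding hφ).exists_matrix
end
end

section
/- (Explicit Koopman linear embedding from a CAP structure with Koopman-closed generator.) Consider a discrete-time controlled system x⁺ = f(x,u). Suppose there exist an invertible matrix T ∈ ℝ^{n×n}, a partition n = n₁ + n₂, functions g, h and matrices C ∈ ℝ^{n₁×n₁}, D ∈ ℝ^{n₁×m} such that, writing col(x₁, x₂) := Tx with x₁ ∈ ℝ^{n₁}, x₂ ∈ ℝ^{n₂}, one has T f(x,u) = col( g(x₂) + Cx₁ + Du , h(x₂) ) for all x ∈ 𝒳, u ∈ 𝒰. Suppose further there exist Ψ̄ : proj_{x₂}(T𝒳) → ℝ^{n̄_z} and matrices Ā_K ∈ ℝ^{n̄_z×n̄_z}, C̄_K¹ ∈ ℝ^{n₂×n̄_z}, C̄_K²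 ∈ ℝ^{n₁×n̄_z} such that Ψ̄(h(x₂)) = Ā_K Ψ̄(x₂), x₂ = C̄_K¹ Ψ̄(x₂), and g(x₂) = C̄_K² Ψ̄(x₂) for all x₂ ∈ proj_{x₂}(T𝒳). Then the lifting Ψ(x) := col( x₁, Ψ̄(x₂) ) (where col(x₁,x₂) = Tx) and the matrices A_K := [[C, C̄_K²],[0, Ā_K]], B_K := col(D, 0), C_K := T^{−1}·[[I_{n₁}, 0],[0, C̄_K¹]] satisfy Ψ(f(x,u)) = A_K Ψ(x) + B_K u and x = C_K Ψ(x) for all x ∈ 𝒳, u ∈ 𝒰. -/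
open Matrix

noncomputable section

/-! The coordinate `x₁` fails to evolve linearly only through `g(x₂)`, which is a linear function of
`Ψ̄(x₂)`, while `Ψ̄(x₂)` evolves linearly by closure. As `x₂` is a linear function of `Ψ̄(x₂)` too,
`Tx` can be read off linearly from the lifting, and a left inverse of `T` then recovers `x`. -/

section Koopman

variable {R n m n₁ n₂ z l : Type*} [Semiring R]

/-- The system `x⁺ = f(x,u)` on `X × U` has CAP structure in the coordinates `col(x₁,x₂) = Tx`:
`x₁⁺ = g(x₂) + Cx₁ + Du` and `x₂⁺ = h(x₂)`. The partition of the coordinates is encoded by indexing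
the rows of `T` by a sum type. -/
def HasCAPStructure [Fintype n] [Fintype m] [Fintype n₁]
    (f : (n → R) → (m → R) → n → R) (X : Set (n → R)) (U : Set (m → R))
    (T : Matrix (n₁ ⊕ n₂) n R) (g : (n₂ → R) → n₁ → R) (h : (n₂ → R) → n₂ → R)
    (C : Matrix n₁ n₁ R) (D : Matrix n₁ m R) : Prop :=
  ∀ x ∈ X, ∀ u ∈ U,
    T *ᵥ f x u =
      Sum.elim (g ((T *ᵥ x) ∘ Sum.inr) + C *ᵥ ((T *ᵥ x) ∘ Sum.inl) + D *ᵥ u)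
        (h ((T *ᵥ x) ∘ Sum.inr))

/-- The observables `Ψb` are Koopman-closed on `P` for the autonomous dynamics `h` (with matrix
`Ab`), and both the state (via `Cb₁`) and the coupling term `g` (via `Cb₂`) lie in their span. -/
structure IsKoopmanClosed [Fintype z] (P : Set (n₂ → R)) (h : (n₂ → R) → n₂ → R)
    (g : (n₂ → R) → n₁ → R) (Ψb : (n₂ → R) → z → R) (Ab : Matrix z z R) (Cb₁ : Matrix n₂ z R)
    (Cb₂ : Matrix n₁ z R) : Prop where
  map_eq : ∀ y ∈ P, Ψb (h y) = Ab *ᵥ Ψb y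
  state_eq : ∀ y ∈ P, y = Cb₁ *ᵥ Ψb y
  coupling_eq : ∀ y ∈ P, g y = Cb₂ *ᵥ Ψb y

/-- The lifting `Ψ(x) = col(x₁, Ψ̄(x₂))`, where `col(x₁,x₂) = Tx`. -/
def capLift [Fintype n] (T : Matrix (n₁ ⊕ n₂) n R) (Ψb : (n₂ → R) → z → R) (x : n → R) :
    n₁ ⊕ z → R :=
  Sum.elim ((T *ᵥ x) ∘ Sum.inl) (Ψb ((T *ᵥ x) ∘ Sum.inr))

/-- `Ψ` is a Koopman linear embedding of `x⁺ = f(x,u)` on `X × U`: the lifted state evolves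
linearly, `Ψ(x⁺) = AΨ(x) + Bu`, and the state is recovered linearly, `x = KΨ(x)`. Invariance of `X`
under `f` is not part of the notion. -/
structure IsKoopmanEmbedding [Fintype m] [Fintype l]
    (f : (n → R) → (m → R) → n → R) (X : Set (n → R)) (U : Set (m → R)) (Ψ : (n → R) → l → R)
    (A : Matrix l l R) (B : Matrix l m R) (K : Matrix n l R) : Prop where
  lift_step : ∀ x ∈ X, ∀ u ∈ U, Ψ (f x u) = A *ᵥ Ψ x + B *ᵥ u
  reconstruct : ∀ x ∈ X, x = K *ᵥ Ψ x

lemma fromBlocks_mulVec_elim_add_fromRows_mulVec [Fintype n₁] [Fintype z] [Fintype m]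
    (C : Matrix l n₁ R) (F : Matrix l z R) (A : Matrix n₂ z R) (D : Matrix l m R)
    (v : n₁ → R) (w : z → R) (u : m → R) :
    fromBlocks C F 0 A *ᵥ Sum.elim v w + fromRows D 0 *ᵥ u =
      Sum.elim (C *ᵥ v + F *ᵥ w + D *ᵥ u) (A *ᵥ w) := by
  simp [fromBlocks_mulVec, fromRows_mulVec, ← Sum.elim_add_add]

lemma fromBlocks_one_mulVec_elim [Fintype n₁] [DecidableEq n₁] [Fintype z]
    (M : Matrix n₂ z R) (v : n₁ → R) (w : z → R) :
    fromBlocks 1 0 0 M *ᵥ Sum.elim v w = Sum.elim v (M *ᵥ w) := by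
  simp [fromBlocks_mulVec]

variable [Fintype n] {T : Matrix (n₁ ⊕ n₂) n R} {Ψb : (n₂ → R) → z → R}

lemma capLift_of_mulVec_eq_elim {x : n → R} {v : n₁ → R} {w : n₂ → R}
    (hx : T *ᵥ x = Sum.elim v w) : capLift T Ψb x = Sum.elim v (Ψb w) := by
  rw [capLift, hx, Sum.elim_comp_inl, Sum.elim_comp_inr]

variable [Fintype n₁] [Fintype z]

lemma fromBlocks_one_mulVec_capLift [DecidableEq n₁] {Cb₁ : Matrix n₂ z R} {x : n → R}
    (hx : (T *ᵥ x) ∘ Sum.inr = Cb₁ *ᵥ Ψb ((T *ᵥ x) ∘ Sum.inr)) :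
    fromBlocks 1 0 0 Cb₁ *ᵥ capLift T Ψb x = T *ᵥ x := by
  rw [capLift, fromBlocks_one_mulVec_elim, ← hx, Sum.elim_comp_inl_inr]

theorem koopman_embedding_from_CAP_with_closure_general
    [Fintype m] [Fintype n₂] [DecidableEq n] [DecidableEq n₁]
    {f : (n → R) → (m → R) → n → R} {X : Set (n → R)} {U : Set (m → R)}
    {S : Matrix n (n₁ ⊕ n₂) R} (hST : S * T = 1)
    {g : (n₂ → R) → n₁ → R} {h : (n₂ → R) → n₂ → R} {C : Matrix n₁ n₁ R} {D : Matrix n₁ m R}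
    (hCAP : HasCAPStructure f X U T g h C D)
    {Ab : Matrix z z R} {Cb₁ : Matrix n₂ z R} {Cb₂ : Matrix n₁ z R}
    (hclosed : IsKoopmanClosed ((fun x => (T *ᵥ x) ∘ Sum.inr) '' X) h g Ψb Ab Cb₁ Cb₂) :
    IsKoopmanEmbedding f X U (capLift T Ψb) (fromBlocks C Cb₂ 0 Ab) (fromRows D 0)
      (S * (fromBlocks 1 0 0 Cb₁ : Matrix (n₁ ⊕ n₂) (n₁ ⊕ z) R)) where
  lift_step x hx u hu := by
    have hmem := Set.mem_image_of_mem (fun x => (T *ᵥ x) ∘ Sum.inr) hx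
    rw [capLift_of_mulVec_eq_elim (hCAP x hx u hu), hclosed.map_eq _ hmem,
      hclosed.coupling_eq _ hmem, capLift, fromBlocks_mulVec_elim_add_fromRows_mulVec,
      add_comm (C *ᵥ _)]
  reconstruct x hx := by
    have hx₂ := hclosed.state_eq _ (Set.mem_image_of_mem (fun x => (T *ᵥ x) ∘ Sum.inr) hx)
    rw [← mulVec_mulVec, fromBlocks_one_mulVec_capLift hx₂, mulVec_mulVec, hST, one_mulVec]

end Koopman

/-- **Explicit Koopman linear embedding from a CAP structure with Koopman-closed
generator.**  Suppose the system `x⁺ = f(x,u)` has, in the coordinates `col(x₁,x₂) = Tx`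
(`T` invertible with inverse `S`), the CAP form `x₁⁺ = g(x₂) + Cx₁ + Du`, `x₂⁺ = h(x₂)`,
and suppose `Ψ̄` satisfies `Ψ̄(h(x₂)) = Ā_K Ψ̄(x₂)`, `x₂ = C̄_K¹ Ψ̄(x₂)` and
`g(x₂) = C̄_K² Ψ̄(x₂)` on `proj_{x₂}(T𝒳)`.  Then the lifting `Ψ(x) = col(x₁, Ψ̄(x₂))`
together with `A_K = [[C, C̄_K²],[0, Ā_K]]`, `B_K = col(D, 0)` and
`C_K = T⁻¹ [[I,0],[0,C̄_K¹]]` satisfies `Ψ(f(x,u)) = A_K Ψ(x) + B_K u` and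
`x = C_K Ψ(x)` on `𝒳 × 𝒰`. -/
theorem koopman_embedding_from_CAP_with_closure
    {n m n₁ n₂ nzb : ℕ} (f : (Fin n → ℝ) → (Fin m → ℝ) → (Fin n → ℝ))
    (X : Set (Fin n → ℝ)) (U : Set (Fin m → ℝ))
    (T : Matrix (Fin n₁ ⊕ Fin n₂) (Fin n) ℝ) (S : Matrix (Fin n) (Fin n₁ ⊕ Fin n₂) ℝ)
    (hTS : T * S = 1) (hST : S * T = 1)
    (g : (Fin n₂ → ℝ) → Fin n₁ → ℝ) (h : (Fin n₂ → ℝ) → Fin n₂ → ℝ)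
    (C : Matrix (Fin n₁) (Fin n₁) ℝ) (D : Matrix (Fin n₁) (Fin m) ℝ)
    (hCAP : ∀ x ∈ X, ∀ u ∈ U,
      T.mulVec (f x u) =
        Sum.elim
          (g (fun i => T.mulVec x (Sum.inr i)) +
            C.mulVec (fun i => T.mulVec x (Sum.inl i)) + D.mulVec u)
          (h (fun i => T.mulVec x (Sum.inr i))))
    (Ψb : (Fin n₂ → ℝ) → Fin nzb → ℝ)
    (Ab : Matrix (Fin nzb) (Fin nzb) ℝ)
    (Cb₁ : Matrix (Fin n₂) (Fin nzb) ℝ) (Cb₂ : Matrix (Fin n₁) (Fin nzb) ℝ)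
    (hclosure : ∀ x ∈ X,
      Ψb (h (fun i => T.mulVec x (Sum.inr i))) =
        Ab.mulVec (Ψb (fun i => T.mulVec x (Sum.inr i))) ∧
      (fun i => T.mulVec x (Sum.inr i)) =
        Cb₁.mulVec (Ψb (fun i => T.mulVec x (Sum.inr i))) ∧
      g (fun i => T.mulVec x (Sum.inr i)) =
        Cb₂.mulVec (Ψb (fun i => T.mulVec x (Sum.inr i)))) :
    (∀ x ∈ X, ∀ u ∈ U,
      Sum.elim (fun i => T.mulVec (f x u) (Sum.inl i))
          (Ψb (fun i => T.mulVec (f x u) (Sum.inr i)))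
        = (Matrix.fromBlocks C Cb₂ 0 Ab).mulVec
            (Sum.elim (fun i => T.mulVec x (Sum.inl i))
              (Ψb (fun i => T.mulVec x (Sum.inr i))))
          + (Matrix.fromRows D 0).mulVec u) ∧
    (∀ x ∈ X,
      x = (S * Matrix.fromBlocks 1 0 0 Cb₁).mulVec
            (Sum.elim (fun i => T.mulVec x (Sum.inl i))
              (Ψb (fun i => T.mulVec x (Sum.inr i))))) := by
  have hclosed : IsKoopmanClosed ((fun x => (T *ᵥ x) ∘ Sum.inr) '' X) h g Ψb Ab Cb₁ Cb₂ :=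
    ⟨Set.forall_mem_image.2 fun x hx => (hclosure x hx).1,
      Set.forall_mem_image.2 fun x hx => (hclosure x hx).2.1,
      Set.forall_mem_image.2 fun x hx => (hclosure x hx).2.2⟩
  have hemb := koopman_embedding_from_CAP_with_closure_general hST hCAP hclosed
  -- The product `S * fromBlocks 1 0 0 Cb₁` in the goal elaborates as a `CStarMatrix` product, which
  -- unfolds to the `Matrix` product of `hemb`; hence the type ascription in the general theorem.
  exact ⟨hemb.lift_step, hemb.reconstruct⟩
end
end

section
/- (Necessity of the full-row-rank condition in the two-layer affine recursion lemma.) Let 𝒳 = ℝ × ℝ_{>0}, 𝒰 = ℝ, Φ(x) := col(x₁, x₂²) for x = col(x₁,x₂) ∈ 𝒳, and B := col(1, 0) ∈ ℝ^{2×1}. Then: (i) Φ(x) + Bu ∈ 𝒳 for all x ∈ 𝒳, u ∈ 𝒰, and the map (x,u) ↦ Φ(x) + Bu from 𝒳 × 𝒰 to 𝒳 is surjective; (ii) Φ(Φ(x) + Bu) = col(x₁, x₂⁴) + col(1,0)·u for all x ∈ 𝒳 and u ∈ 𝒰, i.e., the two-layer composition is affine in u; yet (iii) Φ is not affine on 𝒳: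 there exist no matrix C ∈ ℝ^{2×2} and vector v ∈ ℝ² with Φ(x) = Cx + v for all x ∈ 𝒳. (The matrix B does not have full row rank, so this does not contradict the two-layer affine recursion lemma.) -/
/-!
Since `B` points along the first axis, the input shifts `x₁`, in which `Φ` is the identity, and
never reaches `x₂`, the only coordinate in which `Φ` is nonlinear. So `u` passes through both layers
unchanged, while along the half-line `x₁ = 0` the second coordinate of `Φ` is the strictly convex
function `t ↦ t²`, which no affine map can match.
-/

open Matrix

noncomputable section

/-- The state set `𝒳 = ℝ × ℝ_{>0}`. -/
def Xset : Set (Fin 2 → ℝ) := {x | 0 < x 1}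

/-- The map `Φ(x) = col(x₁, x₂²)`. -/
def Phi : (Fin 2 → ℝ) → (Fin 2 → ℝ) := fun x => ![x 0, x 1 ^ 2]

/-- The input matrix `B = col(1, 0)`. -/
def Bmat : Matrix (Fin 2) (Fin 1) ℝ := !![1; 0]

theorem not_eqOn_affineMap_of_strictConvexOn {𝕜 E F : Type*} [Field 𝕜] [LinearOrder 𝕜]
    [IsStrictOrderedRing 𝕜] [AddCommGroup E] [Module 𝕜 E] [AddCommGroup F] [PartialOrder F]
    [Module 𝕜 F] {s : Set E} {f : E → F} (hf : StrictConvexOn 𝕜 s f) (hs : s.Nontrivial)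
    (g : E →ᵃ[𝕜] F) : ¬ Set.EqOn f g s := by
  intro hfg
  obtain ⟨x, hx, y, hy, hxy⟩ := hs
  have weight_pos : (0 : 𝕜) < 1 / 2 := one_half_pos
  have weights_sum : (1 / 2 : 𝕜) + 1 / 2 = 1 := add_halves 1
  have midpoint_mem := hf.1 hx hy weight_pos.le weight_pos.le weights_sum
  have midpoint_lt := hf.2 hx hy hxy weight_pos weight_pos weights_sum
  rw [hfg midpoint_mem, hfg hx, hfg hy, Convex.combo_affine_apply weights_sum] at midpoint_lt
  exact midpoint_lt.false

theorem bmat_mulVec (u : Fin 1 → ℝ) : Bmat *ᵥ u = ![u 0, 0] := by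
  ext i
  fin_cases i <;> simp [Bmat, mulVec, dotProduct]

theorem phi_add_bmat_mulVec (x : Fin 2 → ℝ) (u : Fin 1 → ℝ) :
    Phi x + Bmat *ᵥ u = ![x 0 + u 0, x 1 ^ 2] := by
  simp [Phi, bmat_mulVec]

theorem phi_add_bmat_mulVec_mem_xset {x : Fin 2 → ℝ} (hx : x 1 ≠ 0) (u : Fin 1 → ℝ) :
    Phi x + Bmat *ᵥ u ∈ Xset := by
  rw [phi_add_bmat_mulVec]
  exact sq_pos_of_ne_zero hx

theorem surjOn_phi_xset : Set.SurjOn Phi Xset Xset := by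
  intro y (hy : 0 < y 1)
  refine ⟨![y 0, √(y 1)], Real.sqrt_pos.2 hy, ?_⟩
  ext i
  fin_cases i <;> simp [Phi, Real.sq_sqrt hy.le]

theorem phi_phi_add_bmat_mulVec (x : Fin 2 → ℝ) (u : Fin 1 → ℝ) :
    Phi (Phi x + Bmat *ᵥ u) = ![x 0, x 1 ^ 4] + Bmat *ᵥ u := by
  rw [phi_add_bmat_mulVec, bmat_mulVec]
  simp [Phi, ← pow_mul]

theorem not_exists_phi_eq_mulVec_add :
    ¬ ∃ (C : Matrix (Fin 2) (Fin 2) ℝ) (v : Fin 2 → ℝ), ∀ x ∈ Xset, Phi x = C *ᵥ x + v := by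
  rintro ⟨C, v, hCv⟩
  have sq_strictConvexOn : StrictConvexOn ℝ (Set.Ioi 0) (fun t : ℝ => t ^ 2) :=
    (even_two.strictConvexOn_pow two_ne_zero).subset (Set.subset_univ _) (convex_Ioi 0)
  let line : ℝ →ᵃ[ℝ] ℝ := (C 1 1 • LinearMap.id).toAffineMap + AffineMap.const ℝ ℝ (v 1)
  refine not_eqOn_affineMap_of_strictConvexOn sq_strictConvexOn
    (Set.Ioi_infinite 0).nontrivial line fun t (ht : 0 < t) => ?_
  have phi_snd : Phi ![0, t] 1 = (C *ᵥ ![0, t] + v) 1 := congrFun (hCv ![0, t] ht) 1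
  simpa [Phi, line, mulVec, dotProduct, Fin.sum_univ_two] using phi_snd

/-- **Necessity of the full-row-rank condition in the two-layer affine recursion lemma.**
With `𝒳 = ℝ × ℝ_{>0}`, `𝒰 = ℝ`, `Φ(x) = col(x₁, x₂²)` and `B = col(1,0)`:
(i) `(x,u) ↦ Φ(x) + Bu` maps `𝒳 × 𝒰` into `𝒳` and is surjective onto `𝒳`;
(ii) `Φ(Φ(x) + Bu) = col(x₁, x₂⁴) + col(1,0)u` on `𝒳 × 𝒰`, i.e. the two-layer composition
is affine in `u`; yet (iii) `Φ` is not affine on `𝒳`. -/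
theorem necessity_of_full_row_rank :
    (∀ x ∈ Xset, ∀ u : Fin 1 → ℝ, Phi x + Bmat.mulVec u ∈ Xset) ∧
    (∀ y ∈ Xset, ∃ x ∈ Xset, ∃ u : Fin 1 → ℝ, Phi x + Bmat.mulVec u = y) ∧
    (∀ x ∈ Xset, ∀ u : Fin 1 → ℝ,
      Phi (Phi x + Bmat.mulVec u) = ![x 0, x 1 ^ 4] + Bmat.mulVec u) ∧
    ¬ ∃ (C : Matrix (Fin 2) (Fin 2) ℝ) (v : Fin 2 → ℝ),
        ∀ x ∈ Xset, Phi x = C.mulVec x + v := by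
  refine ⟨fun x hx u => phi_add_bmat_mulVec_mem_xset (ne_of_gt hx) u, fun y hy => ?_,
    fun x _ u => phi_phi_add_bmat_mulVec x u, not_exists_phi_eq_mulVec_add⟩
  obtain ⟨x, hx, hxy⟩ := surjOn_phi_xset hy
  exact ⟨x, hx, 0, by rw [mulVec_zero, add_zero, hxy]⟩
end
end
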